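/- Let R be a commutative ring with unit, and let p, q : R → R be two functions each satisfying Ref and Ril, i.e. p(p(x)) = x, x·(x·p(x)) = x, q(q(x)) = x, and x·(x·q(x)) = x for all x ∈ R. Then p = q. (The meadow expansion of a commutative von Neumann regular ring is unique.) -/

import Mathlib

/-- Two generalized inverses of the same element of a commutative ring coincide. -/
theorem generalized_inverse_unique {R : Type*} [CommRing R] {x y z : R}
    (hxy : x * (x * y) = x) (hyx : y * (y * x) = y)
    (hxz : x * (x * z) = x) (hzx : z * (z * x) = z) : y = z := by
  linear_combination (x * z - 1) * hyx - y * y * hxz - (x * y - 1) * hzx + z * z * hxy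

theorem meadow_expansion_unique {R : Type*} [CommRing R] (p q : R → R)
    (hpRef : ∀ x : R, p (p x) = x) (hpRil : ∀ x : R, x * (x * p x) = x)
    (hqRef : ∀ x : R, q (q x) = x) (hqRil : ∀ x : R, x * (x * q x) = x) :
    p = q := by
  funext x
  have hp := hpRil (p x)
  have hq := hqRil (q x)
  rw [hpRef] at hp
  rw [hqRef] at hq
  exact generalized_inverse_unique (hpRil x) hp (hqRil x) hq
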